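/- Let S be a semigroup with identity acting on a compact Hausdorff space X from the left (with x ↦ s·x continuous for each s ∈ S). Then there exists a multiplicative left S-invariant Radon probability measure on X if and only if for every n ≥ 1, all s_1, …, s_n ∈ S and all f_1, …, f_n, g_1, …, g_n ∈ C(X), one has ‖1 − Σ_{i=1}^n g_i × (f_i·s_i − f_i)‖_∞ ≥ 1, where × denotes pointwise product, 1 the constant function 1, and ‖·‖_∞ the supremum norm on C(X). -/

import Mathlib

open BoundedContinuousFunction MeasureTheory Filter Topology

noncomputable section

/-- The multiplicative analogue of Fact 4.2: a multiplicative left `S`-invariant Radon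
probability measure on `X` exists iff `‖1 - ∑ i g i × (f i · s i - f i)‖ ≥ 1` for all
finite data. -/
theorem mult_invariant_radon_measure_iff_norm_condition
    {S X : Type*} [Monoid S] [TopologicalSpace X] [CompactSpace X] [T2Space X]
    [MeasurableSpace X] [BorelSpace X] [MulAction S X]
    (hc : ∀ s : S, Continuous fun x : X => s • x) :
    (∃ μ : Measure X, IsProbabilityMeasure μ ∧ μ.Regular ∧
        (∀ (f : C(X, ℝ)) (s : S), ∫ x, f (s • x) ∂μ = ∫ x, f x ∂μ) ∧
        (∀ f g : C(X, ℝ), ∫ x, (f * g) x ∂μ = (∫ x, f x ∂μ) * ∫ x, g x ∂μ)) ↔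
      ∀ (n : ℕ), 1 ≤ n → ∀ (s : Fin n → S) (f g : Fin n → C(X, ℝ)),
        1 ≤ ‖(1 : C(X, ℝ)) -
          ∑ i, g i * ((f i).comp ⟨fun x => s i • x, hc (s i)⟩ - f i)‖ := by
  classical
  constructor
  · rintro ⟨μ, hp, -, hinv, hmul⟩ n - s f g
    have hint : ∀ f : C(X, ℝ), Integrable (fun x => f x) μ := fun f =>
      f.continuous.integrable_of_hasCompactSupport (HasCompactSupport.of_compactSpace _)
    set k : Fin n → C(X, ℝ) := fun i => g i * ((f i).comp ⟨fun x => s i • x, hc (s i)⟩ - f i)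
      with hk
    have hk0 : ∀ i, ∫ x, k i x ∂μ = 0 := by
      intro i
      have h1 := hmul (g i) ((f i).comp ⟨fun x => s i • x, hc (s i)⟩ - f i)
      have h2 : ∫ x, ((f i).comp ⟨fun x => s i • x, hc (s i)⟩ - f i) x ∂μ = 0 := by
        have h3 := integral_sub (hint ((f i).comp ⟨fun x => s i • x, hc (s i)⟩)) (hint (f i))
        have h4 := hinv (f i) (s i)
        simp only [ContinuousMap.sub_apply]
        rw [h3, sub_eq_zero]
        exact h4
      rw [h2, mul_zero] at h1
      exact h1
    have h1 : ∫ x, ((1 : C(X, ℝ)) - ∑ i, k i) x ∂μ = 1 := by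
      have e : ∀ x, ((1 : C(X, ℝ)) - ∑ i, k i) x = 1 - ∑ i, k i x := by
        intro x; simp
      simp_rw [e]
      rw [integral_sub (integrable_const _) (integrable_finsetSum _ fun i _ => hint (k i)),
        integral_finsetSum _ fun i _ => hint (k i)]
      simp [hk0]
    have h2 : ‖∫ x, ((1 : C(X, ℝ)) - ∑ i, k i) x ∂μ‖ ≤ ‖(1 : C(X, ℝ)) - ∑ i, k i‖ * μ.real Set.univ :=
      norm_integral_le_of_norm_le_const (Filter.Eventually.of_forall fun x =>
        ContinuousMap.norm_coe_le_norm _ x)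
    rw [h1] at h2
    simpa using h2
  · intro h
    have hfix : ∃ x : X, ∀ s : S, s • x = x := by
      by_contra! hcon
      rcases isEmpty_or_nonempty X with hX | hX
      · have h1 := h 1 le_rfl (fun _ => 1) (fun _ => 0) (fun _ => 0)
        rw [Subsingleton.elim ((1 : C(X, ℝ)) - _) 0, norm_zero] at h1
        linarith
      choose σ hσ using hcon
      have hsep : ∀ x : X, ∃ f : C(X, ℝ), f (σ x • x) ≠ f x := by
        intro x
        obtain ⟨f, h0, h1, -⟩ := exists_continuous_zero_one_of_isClosed
          (isClosed_singleton (x := σ x • x)) (isClosed_singleton (x := x))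
          (by simpa using hσ x)
        refine ⟨f, ?_⟩
        rw [h0 rfl, h1 rfl]
        simp
      choose F hF using hsep
      let d : X → C(X, ℝ) := fun x => (F x).comp ⟨fun y => σ x • y, hc (σ x)⟩ - F x
      have hd : ∀ x, d x x ≠ 0 := fun x => sub_ne_zero.mpr (hF x)
      obtain ⟨t, ht⟩ := CompactSpace.elim_nhds_subcover (fun x => {y | d x y ≠ 0})
        (fun x => (isOpen_ne_fun (d x).continuous continuous_const).mem_nhds (hd x))
      have hcov : ∀ y, ∃ x ∈ t, d x y ≠ 0 := by
        intro y
        have : y ∈ (⊤ : Set X) := trivial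
        rw [← ht] at this
        simpa using this
      have hpos : ∀ y, 0 < (∑ x ∈ t, d x * d x) y := by
        intro y
        obtain ⟨x, hx, hxy⟩ := hcov y
        simp only [ContinuousMap.coe_sum, Finset.sum_apply, ContinuousMap.mul_apply]
        exact Finset.sum_pos' (fun i _ => mul_self_nonneg _) ⟨x, hx, mul_self_pos.mpr hxy⟩
      let q : C(X, ℝ) := ⟨fun y => ((∑ x ∈ t, d x * d x) y)⁻¹,
        (ContinuousMap.continuous _).inv₀ fun y => (hpos y).ne'⟩
      have hn : 1 ≤ t.card := by
        obtain ⟨x, hx, -⟩ := hcov hX.some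
        exact Finset.card_pos.mpr ⟨x, hx⟩
      let e := t.equivFin.symm
      have h1 := h t.card hn (fun i => σ (e i)) (fun i => F (e i)) (fun i => q * d (e i))
      have h2 : (∑ i, q * d (e i) * d (e i)) = 1 := by
        rw [Equiv.sum_comp e (fun x => q * d x * d x),
          Finset.sum_coe_sort t (fun x => q * d x * d x)]
        simp_rw [mul_assoc]
        rw [← Finset.mul_sum]
        ext y
        exact inv_mul_cancel₀ (hpos y).ne'
      change 1 ≤ ‖(1 : C(X, ℝ)) - ∑ i, q * d (e i) * d (e i)‖ at h1
      rw [h2, sub_self, norm_zero] at h1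
      linarith
    obtain ⟨x, hx⟩ := hfix
    refine ⟨Measure.dirac x, inferInstance, ?_, ?_, ?_⟩
    · have : (Measure.dirac x).OuterRegular := by
        refine ⟨fun A hA r hr => ?_⟩
        by_cases hxA : x ∈ A
        · refine ⟨Set.univ, Set.subset_univ _, isOpen_univ, ?_⟩
          rw [Measure.dirac_apply_of_mem hxA] at hr
          simpa using hr
        · refine ⟨{x}ᶜ, by simpa using hxA, isOpen_compl_singleton, ?_⟩
          simpa using lt_of_le_of_lt bot_le hr
      refine { toOuterRegular := this, innerRegular := ?_ }
      intro U hU r hr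
      by_cases hxU : x ∈ U
      · rw [Measure.dirac_apply_of_mem hxU] at hr
        exact ⟨{x}, by simpa using hxU, isCompact_singleton, by simpa using hr⟩
      · rw [Measure.dirac_apply' _ hU.measurableSet] at hr
        simp [hxU] at hr
    · intro f s
      rw [integral_dirac, integral_dirac, hx s]
    · intro f g
      simp only [integral_dirac, ContinuousMap.mul_apply]
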